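/- Evolution of the mixed Fisher term under the relaxation collision operator: if h : [0,∞) × 𝕋^d × ℝ^d → ℝ is smooth, bounded above and below by positive constants, has all partial derivatives bounded, and solves ∂_t h = λ(Πh − h) with λ > 0, then for every ε > 0 and all t ≥ 0: (d/dt) I^M(h_t) ≤ λ ε I^{ΠV/V}(h_t) + (λ/ε) I^{ΠX/X}(h_t) − λ I^M(h_t). -/

import Mathlib

/-!
The equation reads `Πh = h + λ⁻¹ ∂ₜh`, so `Πh` inherits its regularity from `h`; and since `Πh` does
not depend on `v`, `∇ᵥ∂ₜh = -λ ∇ᵥh`. Exchanging `∂ₜ` with the space derivatives then gives the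
pointwise identity `∂ₜ((∇ₓh · ∇ᵥh) / h) = λ ∇ₓ(Πh / h) · ∇ᵥh - λ (∇ₓh · ∇ᵥh) / h`, whose first term
is bounded by the integrands of `λ ε I^{ΠV/V}` and `(λ / ε) I^{ΠX/X}`, by Young's inequality with
weight `ε Πh / h²`. All integrands are bounded and `ℳ(v) dv dx` is finite, so the time derivative
passes under the integral; no integration by parts is involved.
-/

open MeasureTheory Real Filter

noncomputable section

/-- The standard Gaussian density `ℳ(v) = (2π)^{-d/2} exp(-|v|²/2)` on `ℝ^d`. -/
def gauss (d : ℕ) (v : Fin d → ℝ) : ℝ :=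
  (2 * Real.pi) ^ (-(d : ℝ) / 2) * Real.exp (-(∑ i, v i ^ 2) / 2)

/-- Fundamental domain `[0,1]^d` of the torus `𝕋^d`; the normalized Lebesgue measure on
the torus is the restriction of Lebesgue measure to this cube. -/
def cube (d : ℕ) : Set (Fin d → ℝ) := Set.Icc 0 1

/-- A function of `(x,v)` represents a function on `𝕋^d × ℝ^d` iff it is `ℤ^d`-periodic in `x`. -/
def IsPeriodic (d : ℕ) (f : (Fin d → ℝ) → (Fin d → ℝ) → ℝ) : Prop :=
  ∀ (x v : Fin d → ℝ) (k : Fin d → ℤ), f (x + fun i => (k i : ℝ)) v = f x v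

/-- The projection `Πf(x) = ∫ f(x,u) ℳ(u) du`. -/
def proj (d : ℕ) (f : (Fin d → ℝ) → (Fin d → ℝ) → ℝ) (x : Fin d → ℝ) : ℝ :=
  ∫ u, f x u * gauss d u

/-- Euclidean dot product on `ℝ^d`. -/
def dotp (d : ℕ) (a b : Fin d → ℝ) : ℝ := ∑ i, a i * b i

/-- Squared Euclidean norm on `ℝ^d`. -/
def nsq (d : ℕ) (a : Fin d → ℝ) : ℝ := ∑ i, a i ^ 2

/-- Gradient in the `x` variable. -/
def gradx (d : ℕ) (f : (Fin d → ℝ) → (Fin d → ℝ) → ℝ) (x v : Fin d → ℝ) : Fin d → ℝ :=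
  fun i => fderiv ℝ (fun y => f y v) x (Pi.single i 1)

/-- Gradient in the `v` variable. -/
def gradv (d : ℕ) (f : (Fin d → ℝ) → (Fin d → ℝ) → ℝ) (x v : Fin d → ℝ) : Fin d → ℝ :=
  fun i => fderiv ℝ (fun w => f x w) v (Pi.single i 1)

/-- Gradient of a function of `x` only. -/
def grad1 (d : ℕ) (g : (Fin d → ℝ) → ℝ) (x : Fin d → ℝ) : Fin d → ℝ :=
  fun i => fderiv ℝ g x (Pi.single i 1)

/-- Laplacian in the `v` variable. -/
def lapv (d : ℕ) (f : (Fin d → ℝ) → (Fin d → ℝ) → ℝ) (x v : Fin d → ℝ) : ℝ :=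
  ∑ i, fderiv ℝ (fun w => gradv d f x w i) v (Pi.single i 1)

/-- Integral against `μ = ℳ(v) dv dx` on `𝕋^d × ℝ^d`. -/
def intMu (d : ℕ) (F : (Fin d → ℝ) → (Fin d → ℝ) → ℝ) : ℝ :=
  ∫ x in cube d, ∫ v, F x v * gauss d v

/-- `I^X(h) = ∫ |∇_x h|²/h dμ`. -/
def IX (d : ℕ) (h : (Fin d → ℝ) → (Fin d → ℝ) → ℝ) : ℝ :=
  intMu d fun x v => nsq d (gradx d h x v) / h x v

/-- `I^V(h) = ∫ |∇_v h|²/h dμ`. -/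
def IV (d : ℕ) (h : (Fin d → ℝ) → (Fin d → ℝ) → ℝ) : ℝ :=
  intMu d fun x v => nsq d (gradv d h x v) / h x v

/-- `I^M(h) = ∫ (∇_x h · ∇_v h)/h dμ`. -/
def IM (d : ℕ) (h : (Fin d → ℝ) → (Fin d → ℝ) → ℝ) : ℝ :=
  intMu d fun x v => dotp d (gradx d h x v) (gradv d h x v) / h x v

/-- The full Fisher information `I(h) = ∫ |∇_{x,v} h|²/h dμ`. -/
def Ifull (d : ℕ) (h : (Fin d → ℝ) → (Fin d → ℝ) → ℝ) : ℝ :=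
  intMu d fun x v => (nsq d (gradx d h x v) + nsq d (gradv d h x v)) / h x v

/-- `I^{ΠX}(h) = ∫_{𝕋^d} |∇_x Πh|²/Πh dx`. -/
def IPiX (d : ℕ) (h : (Fin d → ℝ) → (Fin d → ℝ) → ℝ) : ℝ :=
  ∫ x in cube d, nsq d (grad1 d (proj d h) x) / proj d h x

/-- `I^{ΠX/X}(h) = ∫ (|∇_x(Πh/h)|²/(Πh/h)) h dμ`. -/
def IPiXX (d : ℕ) (h : (Fin d → ℝ) → (Fin d → ℝ) → ℝ) : ℝ :=
  intMu d fun x v =>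
    nsq d (gradx d (fun y w => proj d h y / h y w) x v) / (proj d h x / h x v) * h x v

/-- `I^{ΠV/V}(h) = ∫ (|∇_v h|²/h)(Πh/h) dμ`. -/
def IPiVV (d : ℕ) (h : (Fin d → ℝ) → (Fin d → ℝ) → ℝ) : ℝ :=
  intMu d fun x v => nsq d (gradv d h x v) / h x v * (proj d h x / h x v)

/-- The relative entropy `H(h) = ∫ h log h dμ`. -/
def Hent (d : ℕ) (h : (Fin d → ℝ) → (Fin d → ℝ) → ℝ) : ℝ :=
  intMu d fun x v => h x v * Real.log (h x v)

/-- The projected entropy `H_Π(h) = ∫_{𝕋^d} Πh log Πh dx`. -/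
def HPi (d : ℕ) (h : (Fin d → ℝ) → (Fin d → ℝ) → ℝ) : ℝ :=
  ∫ x in cube d, proj d h x * Real.log (proj d h x)

/-- The local average speed `U(x) = ∫ v h(x,v) ℳ(v) dv`. -/
def Uvec (d : ℕ) (h : (Fin d → ℝ) → (Fin d → ℝ) → ℝ) (x : Fin d → ℝ) : Fin d → ℝ :=
  fun i => ∫ v, v i * h x v * gauss d v

/-- The divergence `∇_x · U`. -/
def divU (d : ℕ) (h : (Fin d → ℝ) → (Fin d → ℝ) → ℝ) (x : Fin d → ℝ) : ℝ :=
  ∑ i, fderiv ℝ (fun y => Uvec d h y i) x (Pi.single i 1)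

/-- The `p`-entropy `H^{(p)}(h) = ∫ (h^p - h)/(p(p-1)) dμ`. -/
def Hp (d : ℕ) (p : ℝ) (h : (Fin d → ℝ) → (Fin d → ℝ) → ℝ) : ℝ :=
  intMu d fun x v => (h x v ^ p - h x v) / (p * (p - 1))

/-- The projected `p`-entropy `H_Π^{(p)}(h) = ∫_{𝕋^d} ((Πh)^p - Πh)/(p(p-1)) dx`. -/
def HpPi (d : ℕ) (p : ℝ) (h : (Fin d → ℝ) → (Fin d → ℝ) → ℝ) : ℝ :=
  ∫ x in cube d, ((proj d h x) ^ p - proj d h x) / (p * (p - 1))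

/-- The `p`-Fisher information `I^{(p)}(h) = ∫ h^{p-2} |∇_{x,v} h|² dμ`. -/
def Ipfull (d : ℕ) (p : ℝ) (h : (Fin d → ℝ) → (Fin d → ℝ) → ℝ) : ℝ :=
  intMu d fun x v => h x v ^ (p - 2) * (nsq d (gradx d h x v) + nsq d (gradv d h x v))

/-- The spatial `p`-Fisher information `∫ h^{p-2} |∇_x h|² dμ`. -/
def IpX (d : ℕ) (p : ℝ) (h : (Fin d → ℝ) → (Fin d → ℝ) → ℝ) : ℝ :=
  intMu d fun x v => h x v ^ (p - 2) * nsq d (gradx d h x v)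

/-- Regularity of a time-dependent `h`: smooth, periodic in `x`, bounded above and below by
positive constants, with all partial derivatives bounded. -/
def Regular (d : ℕ) (h : ℝ → (Fin d → ℝ) → (Fin d → ℝ) → ℝ) : Prop :=
  ContDiff ℝ (⊤ : ℕ∞) (fun q : ℝ × (Fin d → ℝ) × (Fin d → ℝ) => h q.1 q.2.1 q.2.2) ∧
  (∀ t, IsPeriodic d (h t)) ∧
  (∃ c C : ℝ, 0 < c ∧ ∀ t x v, c ≤ h t x v ∧ h t x v ≤ C) ∧
  (∀ n : ℕ, ∃ C : ℝ, ∀ q : ℝ × (Fin d → ℝ) × (Fin d → ℝ),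
    ‖iteratedFDeriv ℝ n (fun r : ℝ × (Fin d → ℝ) × (Fin d → ℝ) => h r.1 r.2.1 r.2.2) q‖ ≤ C)

/-- Regularity of a time-independent `h`: smooth, periodic in `x`, bounded above and below by
positive constants, with bounded gradient. -/
def RegularStatic (d : ℕ) (h : (Fin d → ℝ) → (Fin d → ℝ) → ℝ) : Prop :=
  ContDiff ℝ (⊤ : ℕ∞) (fun q : (Fin d → ℝ) × (Fin d → ℝ) => h q.1 q.2) ∧
  IsPeriodic d h ∧
  (∃ c C : ℝ, 0 < c ∧ ∀ x v, c ≤ h x v ∧ h x v ≤ C) ∧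
  (∃ C : ℝ, ∀ q : (Fin d → ℝ) × (Fin d → ℝ),
    ‖fderiv ℝ (fun r : (Fin d → ℝ) × (Fin d → ℝ) => h r.1 r.2) q‖ ≤ C)

/-- `h` solves the linear relaxation Boltzmann equation `∂_t h + v·∇_x h = λ(Πh - h)` for `t ≥ 0`. -/
def SolvesLRB (d : ℕ) (lam : ℝ) (h : ℝ → (Fin d → ℝ) → (Fin d → ℝ) → ℝ) : Prop :=
  ∀ t x v, 0 ≤ t →
    deriv (fun s => h s x v) t + dotp d v (gradx d (h t) x v)
      = lam * (proj d (h t) x - h t x v)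

/-- `h` solves the free transport equation `∂_t h + v·∇_x h = 0` for `t ≥ 0`. -/
def SolvesTransport (d : ℕ) (h : ℝ → (Fin d → ℝ) → (Fin d → ℝ) → ℝ) : Prop :=
  ∀ t x v, 0 ≤ t →
    deriv (fun s => h s x v) t + dotp d v (gradx d (h t) x v) = 0

/-- `h` solves the pure relaxation equation `∂_t h = λ(Πh - h)` for `t ≥ 0`. -/
def SolvesCollision (d : ℕ) (lam : ℝ) (h : ℝ → (Fin d → ℝ) → (Fin d → ℝ) → ℝ) : Prop :=
  ∀ t x v, 0 ≤ t →
    deriv (fun s => h s x v) t = lam * (proj d (h t) x - h t x v)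

/-- `h` solves the kinetic Fokker–Planck equation `∂_t h + v·∇_x h = Δ_v h - v·∇_v h` for `t ≥ 0`. -/
def SolvesKFP (d : ℕ) (h : ℝ → (Fin d → ℝ) → (Fin d → ℝ) → ℝ) : Prop :=
  ∀ t x v, 0 ≤ t →
    deriv (fun s => h s x v) t + dotp d v (gradx d (h t) x v)
      = lapv d (h t) x v - dotp d v (gradv d (h t) x v)

open ProbabilityTheory
open scoped BoundedContinuousFunction ContDiff

/-! ### Bounded continuous functions and the classes `C^n_b` -/

/-- `f` is continuous and bounded, that is, it underlies an element of `α →ᵇ E`. The unbundled form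
lets a formula for a function serve as the function itself. -/
def IsBoundedContinuous {α E : Type*} [TopologicalSpace α] [PseudoMetricSpace E] (f : α → E) :
    Prop :=
  ∃ F : α →ᵇ E, ⇑F = f

namespace IsBoundedContinuous

section Normed

variable {α β E F : Type*} [TopologicalSpace α] [TopologicalSpace β]
  [NormedAddCommGroup E] [NormedAddCommGroup F] {f g : α → E}

lemma of_norm_le (hf : Continuous f) {C : ℝ} (hC : ∀ a, ‖f a‖ ≤ C) : IsBoundedContinuous f :=
  ⟨.ofNormedAddCommGroup f hf C hC, rfl⟩

lemma add (hf : IsBoundedContinuous f) (hg : IsBoundedContinuous g) :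
    IsBoundedContinuous fun a => f a + g a := by
  obtain ⟨⟨f, rfl⟩, ⟨g, rfl⟩⟩ := And.intro hf hg
  exact ⟨f + g, rfl⟩

lemma sub (hf : IsBoundedContinuous f) (hg : IsBoundedContinuous g) :
    IsBoundedContinuous fun a => f a - g a := by
  obtain ⟨⟨f, rfl⟩, ⟨g, rfl⟩⟩ := And.intro hf hg
  exact ⟨f - g, rfl⟩

lemma sum {ι : Type*} {s : Finset ι} {f : ι → α → E} (hf : ∀ i, IsBoundedContinuous (f i)) :
    IsBoundedContinuous fun a => ∑ i ∈ s, f i a := by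
  choose F hF using hf
  exact ⟨∑ i ∈ s, F i, by ext; simp [hF]⟩

lemma comp (hf : IsBoundedContinuous f) {φ : β → α} (hφ : Continuous φ) :
    IsBoundedContinuous fun b => f (φ b) := by
  obtain ⟨f, rfl⟩ := hf
  exact ⟨f.compContinuous ⟨φ, hφ⟩, rfl⟩

lemma const (c : E) : IsBoundedContinuous fun _ : α => c := ⟨.const α c, rfl⟩

lemma smul [NormedSpace ℝ E] {φ : α → ℝ} (hφ : IsBoundedContinuous φ)
    (hf : IsBoundedContinuous f) : IsBoundedContinuous fun a => φ a • f a := by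
  obtain ⟨⟨φ, rfl⟩, ⟨f, rfl⟩⟩ := And.intro hφ hf
  exact ⟨φ • f, rfl⟩

lemma clm_comp [NormedSpace ℝ E] [NormedSpace ℝ F] (L : E →L[ℝ] F)
    (hf : IsBoundedContinuous f) : IsBoundedContinuous fun a => L (f a) := by
  obtain ⟨f, rfl⟩ := hf
  exact ⟨f.comp L L.lipschitz, rfl⟩

end Normed

section Real

variable {α : Type*} [TopologicalSpace α] {f g : α → ℝ}

lemma mul (hf : IsBoundedContinuous f) (hg : IsBoundedContinuous g) :
    IsBoundedContinuous fun a => f a * g a := by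
  obtain ⟨⟨f, rfl⟩, ⟨g, rfl⟩⟩ := And.intro hf hg
  exact ⟨f * g, rfl⟩

lemma pow (hf : IsBoundedContinuous f) (n : ℕ) : IsBoundedContinuous fun a => f a ^ n := by
  obtain ⟨f, rfl⟩ := hf
  exact ⟨f ^ n, rfl⟩

lemma inv (hf : IsBoundedContinuous f) {c : ℝ} (hc : 0 < c) (hcf : ∀ a, c ≤ f a) :
    IsBoundedContinuous fun a => (f a)⁻¹ := by
  obtain ⟨f, rfl⟩ := hf
  have hpos a : 0 < f a := hc.trans_le (hcf a)
  refine of_norm_le (f.continuous.inv₀ fun a => (hpos a).ne') (C := c⁻¹) fun a => ?_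
  rw [norm_inv, Real.norm_of_nonneg (hpos a).le]
  exact inv_anti₀ hc (hcf a)

lemma div (hf : IsBoundedContinuous f) (hg : IsBoundedContinuous g) {c : ℝ} (hc : 0 < c)
    (hcg : ∀ a, c ≤ g a) : IsBoundedContinuous fun a => f a / g a := by
  simpa only [div_eq_mul_inv] using hf.mul (hg.inv hc hcg)

lemma dotp {d : ℕ} {a b : α → Fin d → ℝ} (ha : IsBoundedContinuous a)
    (hb : IsBoundedContinuous b) : IsBoundedContinuous fun p => dotp d (a p) (b p) :=
  sum fun i => (ha.clm_comp (.proj i)).mul (hb.clm_comp (.proj i))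

lemma nsq {d : ℕ} {a : α → Fin d → ℝ} (ha : IsBoundedContinuous a) :
    IsBoundedContinuous fun p => nsq d (a p) :=
  sum fun i => (ha.clm_comp (.proj i)).pow 2

end Real

end IsBoundedContinuous

/-- The class `C^n_b`: `f` is `n` times continuously differentiable, and its derivatives of order
at most `n`, including `f` itself, are bounded. -/
def IsBoundedContDiff {E F : Type*} [NormedAddCommGroup E] [NormedSpace ℝ E]
    [NormedAddCommGroup F] [NormedSpace ℝ F] (n : ℕ) (f : E → F) : Prop :=
  ContDiff ℝ n f ∧ ∀ k ≤ n, ∃ C, ∀ x, ‖iteratedFDeriv ℝ k f x‖ ≤ C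

namespace IsBoundedContDiff

variable {E F G : Type*} [NormedAddCommGroup E] [NormedSpace ℝ E] [NormedAddCommGroup F]
  [NormedSpace ℝ F] [NormedAddCommGroup G] [NormedSpace ℝ G] {n : ℕ} {f g : E → F}

lemma isBoundedContinuous (hf : IsBoundedContDiff n f) : IsBoundedContinuous f := by
  obtain ⟨C, hC⟩ := hf.2 0 n.zero_le
  exact .of_norm_le hf.1.continuous fun x => norm_iteratedFDeriv_zero (𝕜 := ℝ) (f := f) ▸ hC x

lemma differentiable (hf : IsBoundedContDiff (n + 1) f) : Differentiable ℝ f :=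
  hf.1.differentiable (by simp)

lemma of_le {m : ℕ} (hf : IsBoundedContDiff n f) (hmn : m ≤ n) : IsBoundedContDiff m f :=
  ⟨hf.1.of_le (mod_cast hmn), fun k hk => hf.2 k (hk.trans hmn)⟩

lemma add (hf : IsBoundedContDiff n f) (hg : IsBoundedContDiff n g) :
    IsBoundedContDiff n fun x => f x + g x := by
  refine ⟨hf.1.add hg.1, fun k hk => ?_⟩
  obtain ⟨⟨C, hC⟩, ⟨D, hD⟩⟩ := And.intro (hf.2 k hk) (hg.2 k hk)
  have hk' : (k : ℕ∞ω) ≤ n := mod_cast hk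
  refine ⟨C + D, fun x => ?_⟩
  rw [fun_iteratedFDeriv_add_apply (hf.1.of_le hk').contDiffAt (hg.1.of_le hk').contDiffAt]
  exact norm_add_le_of_le (hC x) (hD x)

lemma const_smul (c : ℝ) (hf : IsBoundedContDiff n f) : IsBoundedContDiff n fun x => c • f x := by
  refine ⟨contDiff_const.smul hf.1, fun k hk => ?_⟩
  obtain ⟨C, hC⟩ := hf.2 k hk
  refine ⟨‖c‖ * C, fun x => ?_⟩
  rw [iteratedFDeriv_const_smul_apply' (hf.1.of_le (mod_cast hk)).contDiffAt, norm_smul]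
  exact mul_le_mul_of_nonneg_left (hC x) (norm_nonneg c)

lemma fderiv (hf : IsBoundedContDiff (n + 1) f) : IsBoundedContDiff n (fderiv ℝ f) := by
  refine ⟨hf.1.fderiv_right (by norm_cast), fun k hk => ?_⟩
  simpa only [norm_iteratedFDeriv_fderiv] using hf.2 (k + 1) (Nat.succ_le_succ hk)

lemma clm_apply_const {f : E → F →L[ℝ] G} (hf : IsBoundedContDiff n f) (e : F) :
    IsBoundedContDiff n fun x => f x e := by
  refine ⟨hf.1.clm_apply contDiff_const, fun k hk => ?_⟩
  obtain ⟨C, hC⟩ := hf.2 k hk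
  exact ⟨‖e‖ * C, fun x => (norm_iteratedFDeriv_clm_apply_const hf.1.contDiffAt
    (mod_cast hk)).trans (mul_le_mul_of_nonneg_left (hC x) (norm_nonneg e))⟩

lemma comp_const_add_clm (hf : IsBoundedContDiff n f) (a : E) (L : G →L[ℝ] E) :
    IsBoundedContDiff n fun x => f (a + L x) := by
  have hfa : ContDiff ℝ n fun y => f (a + y) := hf.1.comp (contDiff_const.add contDiff_id)
  refine ⟨hfa.comp L.contDiff, fun k hk => ?_⟩
  obtain ⟨C, hC⟩ := hf.2 k hk
  refine ⟨C * ∏ _ : Fin k, ‖L‖, fun x => ?_⟩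
  have hderiv := L.iteratedFDeriv_comp_right hfa x (i := k) (mod_cast hk)
  rw [iteratedFDeriv_comp_add_left] at hderiv
  calc ‖iteratedFDeriv ℝ k ((fun y => f (a + y)) ∘ L) x‖
      ≤ ‖iteratedFDeriv ℝ k f (a + L x)‖ * ∏ _ : Fin k, ‖L‖ :=
        hderiv ▸ ContinuousMultilinearMap.norm_compContinuousLinearMap_le _ _
    _ ≤ C * ∏ _ : Fin k, ‖L‖ := by gcongr; exact hC _

end IsBoundedContDiff

section SecondDerivative

variable {E F : Type*} [NormedAddCommGroup E] [NormedSpace ℝ E] [NormedAddCommGroup F]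
  [NormedSpace ℝ F] {f : E → F}

lemma differentiable_fderiv_apply (hf : ContDiff ℝ 2 f) (a : E) :
    Differentiable ℝ fun x => fderiv ℝ f x a :=
  ((hf.fderiv_right (m := 1) (by norm_num)).clm_apply contDiff_const).differentiable one_ne_zero

lemma fderiv_fderiv_apply_comm (hf : ContDiff ℝ 2 f) (x a b : E) :
    fderiv ℝ (fun y => fderiv ℝ f y a) x b = fderiv ℝ (fun y => fderiv ℝ f y b) x a := by
  have hf' : Differentiable ℝ (fderiv ℝ f) :=
    (hf.fderiv_right (m := 1) (by norm_num)).differentiable one_ne_zero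
  have hsymm : IsSymmSndFDerivAt ℝ f x := hf.contDiffAt.isSymmSndFDerivAt (by simp)
  simpa [fderiv_clm_apply (hf' x) (differentiableAt_const _)] using hsymm b a

end SecondDerivative

section Integral

variable {α : Type*} [TopologicalSpace α] [MeasurableSpace α] [OpensMeasurableSpace α]
  (μ : Measure α) [IsFiniteMeasure μ]

lemma IsBoundedContinuous.integrable {f : α → ℝ} (hf : IsBoundedContinuous f) :
    Integrable f μ := by
  obtain ⟨f, rfl⟩ := hf
  exact f.integrable μ

lemma hasDerivAt_integral_of_isBoundedContinuous {Φ Ψ : ℝ × α → ℝ} (hΦ : IsBoundedContinuous Φ)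
    (hΨ : IsBoundedContinuous Ψ) (hder : ∀ t a, HasDerivAt (fun s => Φ (s, a)) (Ψ (t, a)) t)
    (t : ℝ) : HasDerivAt (fun s => ∫ a, Φ (s, a) ∂μ) (∫ a, Ψ (t, a) ∂μ) t := by
  have hΦs s : Integrable (fun a => Φ (s, a)) μ := (hΦ.comp (.prodMk_right s)).integrable μ
  have hΨt : Integrable (fun a => Ψ (t, a)) μ := (hΨ.comp (.prodMk_right t)).integrable μ
  obtain ⟨Ψ, rfl⟩ := hΨ
  exact (hasDerivAt_integral_of_dominated_loc_of_deriv_le univ_mem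
    (.of_forall fun s => (hΦs s).aestronglyMeasurable) (hΦs t) hΨt.aestronglyMeasurable
    (.of_forall fun a s _ => Ψ.norm_coe_le_norm (s, a)) (integrable_const ‖Ψ‖)
    (.of_forall fun a s _ => hder s a)).2

end Integral

/-! ### The measure `ℳ(v) dv dx` -/

/-- Phase space, with points `(x, v)`. -/
abbrev PhaseSpace (d : ℕ) : Type := (Fin d → ℝ) × (Fin d → ℝ)

lemma gauss_nonneg (d : ℕ) (v : Fin d → ℝ) : 0 ≤ gauss d v := by
  unfold gauss; positivity

lemma continuous_gauss (d : ℕ) : Continuous (gauss d) := by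
  unfold gauss; fun_prop

lemma gauss_eq_prod (d : ℕ) (v : Fin d → ℝ) : gauss d v = ∏ i, gaussianPDFReal 0 1 (v i) := by
  have hconst : (2 * π) ^ (-(d : ℝ) / 2) = (√(2 * π))⁻¹ ^ d := by
    rw [sqrt_eq_rpow, ← rpow_neg two_pi_pos.le, ← rpow_natCast, ← rpow_mul two_pi_pos.le]
    ring_nf
  simp only [gauss, gaussianPDFReal, Finset.prod_mul_distrib, Finset.prod_const, Finset.card_univ,
    Fintype.card_fin, ← exp_sum, ← Finset.sum_div, Finset.sum_neg_distrib, sub_zero,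
    NNReal.coe_one, mul_one, hconst]

lemma integrable_gauss (d : ℕ) : Integrable (gauss d) := by
  simp only [funext (gauss_eq_prod d)]
  exact .fintype_prod (μ := fun _ : Fin d => (volume : Measure ℝ)) fun _ =>
    integrable_gaussianPDFReal 0 1

lemma integral_gauss (d : ℕ) : ∫ v, gauss d v = 1 := by
  simp only [gauss_eq_prod]
  rw [integral_fintype_prod_volume_eq_pow, integral_gaussianPDFReal_eq_one 0 one_ne_zero, one_pow]

/-- The Gaussian measure `ℳ(v) dv` on `ℝ^d`. -/
def maxwellian (d : ℕ) : Measure (Fin d → ℝ) :=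
  volume.withDensity fun v => ENNReal.ofReal (gauss d v)

instance (d : ℕ) : IsProbabilityMeasure (maxwellian d) where
  measure_univ := by
    rw [maxwellian, withDensity_apply _ .univ, setLIntegral_univ,
      ← ofReal_integral_eq_lintegral_ofReal (integrable_gauss d) (.of_forall (gauss_nonneg d)),
      integral_gauss, ENNReal.ofReal_one]

lemma integral_maxwellian (d : ℕ) (f : (Fin d → ℝ) → ℝ) :
    ∫ v, f v ∂maxwellian d = ∫ v, f v * gauss d v := by
  rw [maxwellian, integral_withDensity_eq_integral_toReal_smul
    (continuous_gauss d).measurable.ennreal_ofReal (.of_forall fun _ => ENNReal.ofReal_lt_top)]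
  simp only [ENNReal.toReal_ofReal (gauss_nonneg d _), smul_eq_mul, mul_comm]

lemma le_proj {d : ℕ} {f : (Fin d → ℝ) → (Fin d → ℝ) → ℝ} {x : Fin d → ℝ} {c : ℝ}
    (hf : IsBoundedContinuous (f x)) (hc : ∀ v, c ≤ f x v) : c ≤ proj d f x := by
  calc c = ∫ _, c ∂maxwellian d := by simp
    _ ≤ ∫ v, f x v ∂maxwellian d :=
      integral_mono (integrable_const c) (hf.integrable _) hc
    _ = proj d f x := integral_maxwellian d (f x)

/-- The measure `ℳ(v) dv dx` on `[0,1]^d × ℝ^d`. -/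
def phaseMeasure (d : ℕ) : Measure (PhaseSpace d) :=
  (volume.restrict (cube d)).prod (maxwellian d)

instance (d : ℕ) : IsFiniteMeasure (phaseMeasure d) :=
  have : IsFiniteMeasure (volume.restrict (cube d)) :=
    isFiniteMeasure_restrict.2 isCompact_Icc.measure_ne_top
  inferInstanceAs (IsFiniteMeasure (Measure.prod _ _))

lemma intMu_eq_integral {d : ℕ} {F : (Fin d → ℝ) → (Fin d → ℝ) → ℝ}
    (hF : Integrable ↿F (phaseMeasure d)) : intMu d F = ∫ p, ↿F p ∂phaseMeasure d := by
  simp only [intMu, ← integral_maxwellian]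
  exact (integral_prod _ hF).symm

lemma hasDerivAt_intMu {d : ℕ} {Φ Ψ : ℝ → (Fin d → ℝ) → (Fin d → ℝ) → ℝ}
    (hΦ : IsBoundedContinuous ↿Φ) (hΨ : IsBoundedContinuous ↿Ψ)
    (hder : ∀ t x v, HasDerivAt (fun s => Φ s x v) (Ψ t x v) t) (t : ℝ) :
    HasDerivAt (fun s => intMu d (Φ s)) (intMu d (Ψ t)) t := by
  rw [intMu_eq_integral (F := Ψ t) ((hΨ.comp (.prodMk_right t)).integrable _),
    funext fun s => intMu_eq_integral (F := Φ s) ((hΦ.comp (.prodMk_right s)).integrable _)]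
  exact hasDerivAt_integral_of_isBoundedContinuous _ hΦ hΨ (fun t p => hder t p.1 p.2) t

/-! ### Partial derivatives of functions of `(t, x, v)` -/

section Derivatives

variable {d : ℕ} {h : ℝ → (Fin d → ℝ) → (Fin d → ℝ) → ℝ}

/-- The time derivative `∂ₜh`. -/
def timeDeriv (h : ℝ → (Fin d → ℝ) → (Fin d → ℝ) → ℝ) :
    ℝ → (Fin d → ℝ) → (Fin d → ℝ) → ℝ :=
  fun t x v => deriv (fun s => h s x v) t

lemma hasDerivAt_slice_time {E G : Type*} [NormedAddCommGroup E] [NormedSpace ℝ E]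
    [NormedAddCommGroup G] [NormedSpace ℝ G] {F : ℝ × E → G} (hF : Differentiable ℝ F) (t : ℝ)
    (p : E) : HasDerivAt (fun s => F (s, p)) (fderiv ℝ F (t, p) (1, 0)) t :=
  (hF (t, p)).hasFDerivAt.comp_hasDerivAt t (hasFDerivAt_prodMk_left t p).hasDerivAt

lemma uncurry_timeDeriv (hh : Differentiable ℝ ↿h) :
    ↿(timeDeriv h) = fun q => fderiv ℝ ↿h q (1, 0) :=
  funext fun q => (hasDerivAt_slice_time hh q.1 q.2).deriv

lemma hasDerivAt_timeDeriv (hh : Differentiable ℝ ↿h) (t : ℝ) (x v : Fin d → ℝ) :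
    HasDerivAt (fun s => h s x v) (timeDeriv h t x v) t :=
  (hasDerivAt_slice_time hh t (x, v)).differentiableAt.hasDerivAt

lemma gradx_eq_fderiv (hh : Differentiable ℝ ↿h) (t : ℝ) (x v : Fin d → ℝ) :
    gradx d (h t) x v = fun i => fderiv ℝ ↿h (t, x, v) (0, Pi.single i 1, 0) := by
  have hslice := (hasFDerivAt_prodMk_right (𝕜 := ℝ) t (x, v)).comp x
    (hasFDerivAt_prodMk_left (𝕜 := ℝ) x v)
  exact funext fun _ => DFunLike.congr_fun ((hh (t, x, v)).hasFDerivAt.comp x hslice).fderiv _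

lemma gradv_eq_fderiv (hh : Differentiable ℝ ↿h) (t : ℝ) (x v : Fin d → ℝ) :
    gradv d (h t) x v = fun i => fderiv ℝ ↿h (t, x, v) (0, 0, Pi.single i 1) := by
  have hslice := (hasFDerivAt_prodMk_right (𝕜 := ℝ) t (x, v)).comp v
    (hasFDerivAt_prodMk_right (𝕜 := ℝ) x v)
  exact funext fun _ => DFunLike.congr_fun ((hh (t, x, v)).hasFDerivAt.comp v hslice).fderiv _

lemma isBoundedContDiff_timeDeriv {n : ℕ} (hh : IsBoundedContDiff (n + 1) ↿h) :
    IsBoundedContDiff n ↿(timeDeriv h) :=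
  uncurry_timeDeriv hh.differentiable ▸ hh.fderiv.clm_apply_const _

lemma isBoundedContinuous_gradx (hh : IsBoundedContDiff 1 ↿h) :
    IsBoundedContinuous fun q : ℝ × PhaseSpace d => gradx d (h q.1) q.2.1 q.2.2 := by
  simp only [gradx_eq_fderiv hh.differentiable]
  exact hh.fderiv.isBoundedContinuous.clm_comp (.pi fun i => .apply ℝ ℝ (0, Pi.single i 1, 0))

lemma isBoundedContinuous_gradv (hh : IsBoundedContDiff 1 ↿h) :
    IsBoundedContinuous fun q : ℝ × PhaseSpace d => gradv d (h q.1) q.2.1 q.2.2 := by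
  simp only [gradv_eq_fderiv hh.differentiable]
  exact hh.fderiv.isBoundedContinuous.clm_comp (.pi fun i => .apply ℝ ℝ (0, 0, Pi.single i 1))

lemma differentiable_timeDeriv (hh : ContDiff ℝ 2 ↿h) : Differentiable ℝ ↿(timeDeriv h) :=
  uncurry_timeDeriv (hh.differentiable two_ne_zero) ▸ differentiable_fderiv_apply hh _

lemma hasDerivAt_fderiv_apply (hh : ContDiff ℝ 2 ↿h) (t : ℝ) (p : PhaseSpace d)
    (e : ℝ × PhaseSpace d) :
    HasDerivAt (fun s => fderiv ℝ ↿h (s, p) e) (fderiv ℝ ↿(timeDeriv h) (t, p) e) t := by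
  rw [uncurry_timeDeriv (hh.differentiable two_ne_zero), ← fderiv_fderiv_apply_comm hh]
  exact hasDerivAt_slice_time (differentiable_fderiv_apply hh _) t p

lemma hasDerivAt_gradx (hh : ContDiff ℝ 2 ↿h) (t : ℝ) (x v : Fin d → ℝ) :
    HasDerivAt (fun s => gradx d (h s) x v) (gradx d (timeDeriv h t) x v) t := by
  simp only [gradx_eq_fderiv (hh.differentiable two_ne_zero),
    gradx_eq_fderiv (differentiable_timeDeriv hh)]
  exact hasDerivAt_pi.2 fun i => hasDerivAt_fderiv_apply hh t (x, v) _

lemma hasDerivAt_gradv (hh : ContDiff ℝ 2 ↿h) (t : ℝ) (x v : Fin d → ℝ) :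
    HasDerivAt (fun s => gradv d (h s) x v) (gradv d (timeDeriv h t) x v) t := by
  simp only [gradv_eq_fderiv (hh.differentiable two_ne_zero),
    gradv_eq_fderiv (differentiable_timeDeriv hh)]
  exact hasDerivAt_pi.2 fun i => hasDerivAt_fderiv_apply hh t (x, v) _

end Derivatives

/-! ### The first variation of `I^M` -/

lemma dotp_eq_dotProduct {d : ℕ} (a b : Fin d → ℝ) : dotp d a b = a ⬝ᵥ b := rfl

lemma hasDerivAt_dotp {d : ℕ} {a b : ℝ → Fin d → ℝ} {a' b' : Fin d → ℝ} {t : ℝ}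
    (ha : HasDerivAt a a' t) (hb : HasDerivAt b b' t) :
    HasDerivAt (fun s => dotp d (a s) (b s)) (dotp d a' (b t) + dotp d (a t) b') t := by
  simp only [dotp, ← Finset.sum_add_distrib]
  exact .fun_sum fun i _ => (hasDerivAt_pi.1 ha i).mul (hasDerivAt_pi.1 hb i)

/-- The integrand of the first variation of `I^M` at `f` in the direction `g`. -/
def mixedFisherVariation (d : ℕ) (f g : (Fin d → ℝ) → (Fin d → ℝ) → ℝ) (x v : Fin d → ℝ) : ℝ :=
  ((dotp d (gradx d g x v) (gradv d f x v) + dotp d (gradx d f x v) (gradv d g x v)) * f x v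
    - dotp d (gradx d f x v) (gradv d f x v) * g x v) / f x v ^ 2

section Evolution

variable {d : ℕ} {h : ℝ → (Fin d → ℝ) → (Fin d → ℝ) → ℝ} {c : ℝ}

lemma isBoundedContinuous_mixedFisherVariation (hh : IsBoundedContDiff 2 ↿h) (hc : 0 < c)
    (hch : ∀ t x v, c ≤ h t x v) :
    IsBoundedContinuous ↿fun t => mixedFisherVariation d (h t) (timeDeriv h t) := by
  have hh₁ := hh.of_le one_le_two
  have hg := isBoundedContDiff_timeDeriv hh
  have hx := isBoundedContinuous_gradx hh₁
  have hv := isBoundedContinuous_gradv hh₁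
  have hh₀ := hh.isBoundedContinuous
  have hlow (q : ℝ × PhaseSpace d) : c ^ 2 ≤ ↿h q ^ 2 := pow_le_pow_left₀ hc.le (hch _ _ _) 2
  exact (((((isBoundedContinuous_gradx hg).dotp hv).add
    (hx.dotp (isBoundedContinuous_gradv hg))).mul hh₀).sub
      ((hx.dotp hv).mul hg.isBoundedContinuous)).div (hh₀.pow 2) (pow_pos hc 2) hlow

theorem hasDerivAt_IM (hh : IsBoundedContDiff 2 ↿h) (hc : 0 < c)
    (hch : ∀ t x v, c ≤ h t x v) (t : ℝ) :
    HasDerivAt (fun s => IM d (h s))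
      (intMu d (mixedFisherVariation d (h t) (timeDeriv h t))) t := by
  have hh₁ := hh.of_le one_le_two
  refine hasDerivAt_intMu (Ψ := fun t => mixedFisherVariation d (h t) (timeDeriv h t))
    (((isBoundedContinuous_gradx hh₁).dotp (isBoundedContinuous_gradv hh₁)).div
      hh.isBoundedContinuous hc fun q => hch _ _ _)
    (isBoundedContinuous_mixedFisherVariation hh hc hch) (fun t x v => ?_) t
  exact (hasDerivAt_dotp (hasDerivAt_gradx hh.1 t x v) (hasDerivAt_gradv hh.1 t x v)).div
    (hasDerivAt_timeDeriv hh₁.differentiable t x v) (hc.trans_le (hch t x v)).ne'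

end Evolution

/-! ### Relaxation towards a function of `x` -/

section Relaxation

variable {d : ℕ} {f : (Fin d → ℝ) → (Fin d → ℝ) → ℝ} {ρ : (Fin d → ℝ) → ℝ} {x v : Fin d → ℝ}

lemma gradv_relaxation (lam : ℝ) :
    gradv d (fun x v => lam * (ρ x - f x v)) x v = -lam • gradv d f x v := by
  ext i
  have hfun : (fun w => lam * (ρ x - f x w)) = lam • fun w => ρ x - f x w := rfl
  simp [gradv, hfun, fderiv_const_smul_field, fderiv_const_sub]

lemma gradx_relaxation (lam : ℝ) (hf : DifferentiableAt ℝ (fun y => f y v) x)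
    (hρ : DifferentiableAt ℝ ρ x) :
    gradx d (fun x v => lam * (ρ x - f x v)) x v = lam • (grad1 d ρ x - gradx d f x v) := by
  ext i
  rw [gradx, fderiv_const_mul (hρ.fun_sub hf), fderiv_fun_sub hρ hf]
  rfl

lemma gradx_quotient (hf : DifferentiableAt ℝ (fun y => f y v) x) (hρ : DifferentiableAt ℝ ρ x)
    (hne : f x v ≠ 0) :
    gradx d (fun y w => ρ y / f y w) x v
      = (f x v)⁻¹ • (grad1 d ρ x - (ρ x / f x v) • gradx d f x v) := by
  have hinv : HasFDerivAt (fun y => (f y v)⁻¹) (-(f x v ^ 2)⁻¹ • fderiv ℝ (fun y => f y v) x) x :=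
    (hasDerivAt_inv hne).comp_hasFDerivAt x hf.hasFDerivAt
  ext i
  simp only [gradx, grad1, div_eq_mul_inv, (hρ.hasFDerivAt.fun_mul hinv).fderiv, add_apply,
    smul_apply, Pi.smul_apply, Pi.sub_apply, smul_eq_mul]
  field_simp
  ring

lemma mixedFisherVariation_relaxation (lam : ℝ) (hf : DifferentiableAt ℝ (fun y => f y v) x)
    (hρ : DifferentiableAt ℝ ρ x) (hne : f x v ≠ 0) :
    mixedFisherVariation d f (fun x v => lam * (ρ x - f x v)) x v
      = lam * dotp d (gradx d (fun y w => ρ y / f y w) x v) (gradv d f x v)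
        - lam * (dotp d (gradx d f x v) (gradv d f x v) / f x v) := by
  simp only [mixedFisherVariation, gradx_relaxation lam hf hρ, gradv_relaxation,
    gradx_quotient hf hρ hne, dotp_eq_dotProduct, smul_dotProduct, dotProduct_smul,
    sub_dotProduct, smul_eq_mul]
  field_simp
  ring

lemma dotp_le_weighted_nsq (a b : Fin d → ℝ) {r : ℝ} (hr : 0 < r) :
    dotp d a b ≤ r * nsq d b + nsq d a / r := by
  simp only [dotp, nsq, Finset.mul_sum, Finset.sum_div, ← Finset.sum_add_distrib]
  refine Finset.sum_le_sum fun i _ => ?_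
  have hsq : 0 ≤ (r * b i - a i) ^ 2 / r := by positivity
  have hexpand : (r * b i - a i) ^ 2 / r = r * b i ^ 2 + a i ^ 2 / r - 2 * (a i * b i) := by
    field_simp
    ring
  have hsum : 0 ≤ r * b i ^ 2 + a i ^ 2 / r := by positivity
  linarith

lemma mixedFisherVariation_relaxation_le {lam ε : ℝ} (hlam : 0 ≤ lam) (hε : 0 < ε)
    (hf : DifferentiableAt ℝ (fun y => f y v) x) (hρ : DifferentiableAt ℝ ρ x)
    (hfpos : 0 < f x v) (hρpos : 0 < ρ x) :
    mixedFisherVariation d f (fun x v => lam * (ρ x - f x v)) x v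
      ≤ lam * ε * (nsq d (gradv d f x v) / f x v * (ρ x / f x v))
        + lam / ε * (nsq d (gradx d (fun y w => ρ y / f y w) x v) / (ρ x / f x v) * f x v)
        - lam * (dotp d (gradx d f x v) (gradv d f x v) / f x v) := by
  set a := gradx d (fun y w => ρ y / f y w) x v
  set b := gradv d f x v
  rw [mixedFisherVariation_relaxation lam hf hρ hfpos.ne']
  gcongr ?_ - _
  calc lam * dotp d a b
      ≤ lam * (ε * ρ x / f x v ^ 2 * nsq d b + nsq d a / (ε * ρ x / f x v ^ 2)) := by
        gcongr; exact dotp_le_weighted_nsq a b (by positivity)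
    _ = _ := by field_simp

end Relaxation

section RelaxationIntegral

variable {d : ℕ} {f : (Fin d → ℝ) → (Fin d → ℝ) → ℝ} {ρ : (Fin d → ℝ) → ℝ} {c : ℝ}

lemma IsBoundedContDiff.differentiable_slice (hf : IsBoundedContDiff 1 ↿f) (v : Fin d → ℝ) :
    Differentiable ℝ fun y => f y v :=
  hf.differentiable.comp (differentiable_id.prodMk (differentiable_const v))

lemma IsBoundedContDiff.uncurry_const {n : ℕ} (hf : IsBoundedContDiff n ↿f) :
    IsBoundedContDiff n ↿fun _ : ℝ => f := by
  have hsnd := hf.comp_const_add_clm 0 (.snd ℝ ℝ (PhaseSpace d))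
  simp only [zero_add] at hsnd
  exact hsnd

lemma isBoundedContinuous_gradx_static (hf : IsBoundedContDiff 1 ↿f) :
    IsBoundedContinuous fun p : PhaseSpace d => gradx d f p.1 p.2 :=
  (isBoundedContinuous_gradx hf.uncurry_const).comp (.prodMk_right (0 : ℝ))

lemma isBoundedContinuous_gradv_static (hf : IsBoundedContDiff 1 ↿f) :
    IsBoundedContinuous fun p : PhaseSpace d => gradv d f p.1 p.2 :=
  (isBoundedContinuous_gradv hf.uncurry_const).comp (.prodMk_right (0 : ℝ))

lemma isBoundedContinuous_grad1 (hρ : IsBoundedContDiff 1 ρ) :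
    IsBoundedContinuous (grad1 d ρ) :=
  hρ.fderiv.isBoundedContinuous.clm_comp (.pi fun i => .apply ℝ ℝ (Pi.single i 1))

lemma isBoundedContinuous_gradx_quotient (hf : IsBoundedContDiff 1 ↿f)
    (hρ : IsBoundedContDiff 1 ρ) (hc : 0 < c) (hcf : ∀ x v, c ≤ f x v) :
    IsBoundedContinuous fun p : PhaseSpace d => gradx d (fun y w => ρ y / f y w) p.1 p.2 := by
  simp only [gradx_quotient (hf.differentiable_slice _ _) (hρ.differentiable _)
    (hc.trans_le (hcf _ _)).ne']
  have hf₀ := hf.isBoundedContinuous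
  have hcf' (p : PhaseSpace d) : c ≤ ↿f p := hcf p.1 p.2
  exact (hf₀.inv hc hcf').smul (((isBoundedContinuous_grad1 hρ).comp continuous_fst).sub
    (((hρ.isBoundedContinuous.comp continuous_fst).div hf₀ hc hcf').smul
      (isBoundedContinuous_gradx_static hf)))

lemma isBoundedContinuous_mixedFisherVariation_relaxation (lam : ℝ)
    (hf : IsBoundedContDiff 1 ↿f) (hρ : IsBoundedContDiff 1 ρ) (hc : 0 < c)
    (hcf : ∀ x v, c ≤ f x v) :
    IsBoundedContinuous ↿(mixedFisherVariation d f fun x v => lam * (ρ x - f x v)) := by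
  have hidentity : ↿(mixedFisherVariation d f fun x v => lam * (ρ x - f x v)) =
      fun p : PhaseSpace d =>
        lam * dotp d (gradx d (fun y w => ρ y / f y w) p.1 p.2) (gradv d f p.1 p.2)
          - lam * (dotp d (gradx d f p.1 p.2) (gradv d f p.1 p.2) / f p.1 p.2) :=
    funext fun p => mixedFisherVariation_relaxation lam (hf.differentiable_slice _ _)
      (hρ.differentiable _) (hc.trans_le (hcf _ _)).ne'
  have hv := isBoundedContinuous_gradv_static hf
  rw [hidentity]
  exact ((IsBoundedContinuous.const lam).mul
      ((isBoundedContinuous_gradx_quotient hf hρ hc hcf).dotp hv)).sub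
    ((IsBoundedContinuous.const lam).mul
      (((isBoundedContinuous_gradx_static hf).dotp hv).div hf.isBoundedContinuous hc
        fun p => hcf p.1 p.2))

theorem intMu_mixedFisherVariation_relaxation_le {lam ε : ℝ} (hlam : 0 ≤ lam) (hε : 0 < ε)
    (hf : IsBoundedContDiff 1 ↿f) (hρ : IsBoundedContDiff 1 ρ) (hc : 0 < c)
    (hcf : ∀ x v, c ≤ f x v) (hcρ : ∀ x, c ≤ ρ x) :
    intMu d (mixedFisherVariation d f fun x v => lam * (ρ x - f x v))
      ≤ lam * ε * intMu d (fun x v => nsq d (gradv d f x v) / f x v * (ρ x / f x v))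
        + lam / ε * intMu d (fun x v =>
            nsq d (gradx d (fun y w => ρ y / f y w) x v) / (ρ x / f x v) * f x v)
        - lam * IM d f := by
  have hcf' (p : PhaseSpace d) : c ≤ ↿f p := hcf p.1 p.2
  have hf₀ := hf.isBoundedContinuous
  have hρ₀ : IsBoundedContinuous fun p : PhaseSpace d => ρ p.1 :=
    hρ.isBoundedContinuous.comp continuous_fst
  have hv := isBoundedContinuous_gradv_static hf
  have hq := isBoundedContinuous_gradx_quotient hf hρ hc hcf
  have hV : IsBoundedContinuous ↿fun x v => nsq d (gradv d f x v) / f x v * (ρ x / f x v) :=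
    (hv.nsq.div hf₀ hc hcf').mul (hρ₀.div hf₀ hc hcf')
  have hX : IsBoundedContinuous ↿fun x v =>
      nsq d (gradx d (fun y w => ρ y / f y w) x v) / (ρ x / f x v) * f x v := by
    simp only [div_div_eq_mul_div]
    exact ((hq.nsq.mul hf₀).div hρ₀ hc fun p => hcρ p.1).mul hf₀
  have hM : IsBoundedContinuous ↿fun x v => dotp d (gradx d f x v) (gradv d f x v) / f x v :=
    ((isBoundedContinuous_gradx_static hf).dotp hv).div hf₀ hc hcf'
  have hL := isBoundedContinuous_mixedFisherVariation_relaxation lam hf hρ hc hcf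
  have hV' := (hV.integrable (phaseMeasure d)).const_mul (lam * ε)
  have hX' := (hX.integrable (phaseMeasure d)).const_mul (lam / ε)
  have hM' := (hM.integrable (phaseMeasure d)).const_mul lam
  rw [IM, intMu_eq_integral (hL.integrable _), intMu_eq_integral (hV.integrable _),
    intMu_eq_integral (hX.integrable _), intMu_eq_integral (hM.integrable _), ← integral_const_mul,
    ← integral_const_mul, ← integral_const_mul, ← integral_add hV' hX',
    ← integral_sub (hV'.fun_add hX') hM']
  exact integral_mono (hL.integrable _) ((hV'.fun_add hX').sub hM') fun p =>
    mixedFisherVariation_relaxation_le hlam hε (hf.differentiable_slice _ _)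
      (hρ.differentiable _) (hc.trans_le (hcf _ _)) (hc.trans_le (hcρ _))

end RelaxationIntegral

/-! ### The relaxation equation -/

section Collision

variable {d : ℕ} {lam : ℝ} {h : ℝ → (Fin d → ℝ) → (Fin d → ℝ) → ℝ}

lemma SolvesCollision.timeDeriv_eq (hpde : SolvesCollision d lam h) {t : ℝ} (ht : 0 ≤ t) :
    timeDeriv h t = fun x v => lam * (proj d (h t) x - h t x v) :=
  funext fun x => funext fun v => hpde t x v ht

lemma SolvesCollision.isBoundedContDiff_proj {n : ℕ} (hpde : SolvesCollision d lam h)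
    (hlam : lam ≠ 0) (hh : IsBoundedContDiff (n + 1) ↿h) {t : ℝ} (ht : 0 ≤ t) :
    IsBoundedContDiff n (proj d (h t)) := by
  have hproj : proj d (h t) = fun x => h t x 0 + lam⁻¹ • timeDeriv h t x 0 := by
    ext x
    rw [hpde.timeDeriv_eq ht, smul_eq_mul, inv_mul_cancel_left₀ hlam, add_sub_cancel]
  have hsum := (hh.of_le n.le_succ).add ((isBoundedContDiff_timeDeriv hh).const_smul lam⁻¹)
  have hslice := hsum.comp_const_add_clm (t, 0, 0)
    (.inr ℝ ℝ (PhaseSpace d) ∘L .inl ℝ (Fin d → ℝ) (Fin d → ℝ))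
  rw [hproj]
  simpa [Function.HasUncurry.uncurry] using hslice

end Collision

theorem mixed_fisher_collision_general (d : ℕ) (lam : ℝ) (hlam : 0 < lam)
    (h : ℝ → (Fin d → ℝ) → (Fin d → ℝ) → ℝ) (hh : IsBoundedContDiff 2 ↿h)
    (hpos : ∃ c, 0 < c ∧ ∀ t x v, c ≤ h t x v) (hpde : SolvesCollision d lam h) :
    ∀ ε : ℝ, 0 < ε → ∀ t : ℝ, 0 ≤ t →
      ∃ c : ℝ, HasDerivAt (fun s => IM d (h s)) c t ∧
        c ≤ lam * ε * IPiVV d (h t) + (lam / ε) * IPiXX d (h t) - lam * IM d (h t) := by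
  intro ε hε t ht
  obtain ⟨c, hc, hch⟩ := hpos
  refine ⟨_, hasDerivAt_IM hh hc hch t, ?_⟩
  have hslice : IsBoundedContDiff 1 ↿(h t) := by
    simpa [Function.HasUncurry.uncurry] using
      (hh.of_le one_le_two).comp_const_add_clm (t, 0) (.inr ℝ ℝ (PhaseSpace d))
  have hproj : IsBoundedContDiff 1 (proj d (h t)) := hpde.isBoundedContDiff_proj hlam.ne' hh ht
  have hcproj (x : Fin d → ℝ) : c ≤ proj d (h t) x :=
    le_proj (hslice.isBoundedContinuous.comp (.prodMk_right x)) (hch t x)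
  rw [hpde.timeDeriv_eq ht]
  exact intMu_mixedFisherVariation_relaxation_le hlam.le hε hslice hproj hc (hch t) hcproj

/-- Evolution of the mixed Fisher term under the relaxation collision operator:
for every `ε > 0`, `(d/dt) I^M(h_t) ≤ λ ε I^{ΠV/V}(h_t) + (λ/ε) I^{ΠX/X}(h_t) - λ I^M(h_t)`. -/
theorem mixed_fisher_collision
    (d : ℕ) (hd : 1 ≤ d) (lam : ℝ) (hlam : 0 < lam)
    (h : ℝ → (Fin d → ℝ) → (Fin d → ℝ) → ℝ)
    (hreg : Regular d h)
    (hpde : SolvesCollision d lam h) :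
    ∀ ε : ℝ, 0 < ε → ∀ t : ℝ, 0 ≤ t →
      ∃ c : ℝ, HasDerivAt (fun s => IM d (h s)) c t ∧
        c ≤ lam * ε * IPiVV d (h t) + (lam / ε) * IPiXX d (h t) - lam * IM d (h t) := by
  obtain ⟨hsmooth, -, ⟨c, _, hc, hbounds⟩, hderiv⟩ := hreg
  exact mixed_fisher_collision_general d lam hlam h
    ⟨contDiff_infty.1 hsmooth 2, fun k _ => hderiv k⟩ ⟨c, hc, fun t x v => (hbounds t x v).1⟩ hpde

end
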